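/- Let G be a group, S ⊆ G a symmetric, conjugation-closed generating set not containing the identity, and ‖·‖_S the associated word norm. Let Φ: G → ℝ be a relative quasimorphism with respect to ‖·‖_S with constant C > 0. Assume that for every g ∈ G the limit Φ̄(g) = lim_{n→∞} Φ(gⁿ)/n exists and that Φ̄(s) = 0 for every s ∈ S. Then for every f ∈ G the stable word norm lim_{k→∞} ‖f^k‖_S/k exists and is at least |Φ̄(f)|/(3C). In particular, if Φ̄(f) ≠ 0 for some f ∈ G, then the word norm ‖·‖_S is stably unbounded. -/

import Mathlib

/-- The word norm associated with a generating set `S`: the least `n` such that `g`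
is a product of `n` elements of `S` (so the identity has word norm `0`). -/
noncomputable def wordNorm {G : Type*} [Group G] (S : Set G) (g : G) : ℕ :=
  sInf {n : ℕ | ∃ l : List G, l.length = n ∧ (∀ x ∈ l, x ∈ S) ∧ l.prod = g}

/-!
A generator `s` has norm at most `1`, so `Φ (s ^ n)` differs from `n * Φ s` by at most `n * C`.
Dividing by `n` and using `Φbar s = 0` gives `|Φ s| ≤ C`. Splitting a shortest word for `g` letter
by letter then costs `C` for the value of `Φ` at each letter and `C` for each product, whence
`|Φ g| ≤ 2 * C * ‖g‖`. Apply this to `f ^ k`, divide by `k` and let `k → ∞`; the limit on the right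
exists by Fekete's lemma.
-/

open Filter Topology

section Stabilization

variable {M : Type*} [Monoid M] {ν : M → ℝ}

/-- The stabilization `lim ν (g ^ n) / n` of a norm `ν`. It is a junk value if the limit does not
exist. -/
noncomputable def stabilization (ν : M → ℝ) (g : M) : ℝ :=
  limUnder atTop fun n : ℕ => ν (g ^ n) / n

theorem tendsto_stabilization (hnonneg : ∀ g, 0 ≤ ν g) (hmul : ∀ g h, ν (g * h) ≤ ν g + ν h)
    (g : M) : Tendsto (fun n : ℕ => ν (g ^ n) / n) atTop (𝓝 (stabilization ν g)) := by
  have hsub : Subadditive fun n : ℕ => ν (g ^ n) := fun m n => by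
    simpa only [pow_add] using hmul (g ^ m) (g ^ n)
  have hbdd : BddBelow (Set.range fun n : ℕ => ν (g ^ n) / n) :=
    ⟨0, Set.forall_mem_range.2 fun n => div_nonneg (hnonneg _) n.cast_nonneg⟩
  exact tendsto_nhds_limUnder ⟨_, hsub.tendsto_lim hbdd⟩

end Stabilization

/-- Relative quasimorphisms with respect to a norm `ν`, with constant `C ≥ 0`. Only the values of
`ν` enter, so `ν` is allowed to be any real function. -/
structure IsRelativeQuasimorphism {M : Type*} [Mul M] (ν : M → ℝ) (C : ℝ) (Φ : M → ℝ) : Prop where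
  nonneg : 0 ≤ C
  abs_map_mul_sub_sub_le_min : ∀ g h, |Φ (g * h) - Φ g - Φ h| ≤ C * min (ν g) (ν h)

namespace IsRelativeQuasimorphism

section Mul

variable {M : Type*} [Mul M] {ν Φ : M → ℝ} {C : ℝ}

theorem abs_map_mul_sub_sub_le (hΦ : IsRelativeQuasimorphism ν C Φ) (g h : M) :
    |Φ (g * h) - Φ g - Φ h| ≤ C * ν g :=
  (hΦ.abs_map_mul_sub_sub_le_min g h).trans
    (mul_le_mul_of_nonneg_left (min_le_left _ _) hΦ.nonneg)

end Mul

variable {M : Type*} [Monoid M] {ν Φ : M → ℝ} {C : ℝ}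

theorem map_one (hΦ : IsRelativeQuasimorphism ν C Φ) (hν : ν 1 = 0) : Φ 1 = 0 := by
  simpa [hν] using hΦ.abs_map_mul_sub_sub_le 1 1

theorem abs_map_list_prod_sub_sum_le (hΦ : IsRelativeQuasimorphism ν C Φ) (hν : ν 1 = 0)
    (l : List M) : |Φ l.prod - (l.map Φ).sum| ≤ C * (l.map ν).sum := by
  induction l with
  | nil => simp [hΦ.map_one hν]
  | cons g l ih =>
    simp only [List.prod_cons, List.map_cons, List.sum_cons]
    calc |Φ (g * l.prod) - (Φ g + (l.map Φ).sum)|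
        = |(Φ (g * l.prod) - Φ g - Φ l.prod) + (Φ l.prod - (l.map Φ).sum)| := by ring_nf
      _ ≤ |Φ (g * l.prod) - Φ g - Φ l.prod| + |Φ l.prod - (l.map Φ).sum| := abs_add_le _ _
      _ ≤ C * ν g + C * (l.map ν).sum := add_le_add (hΦ.abs_map_mul_sub_sub_le g l.prod) ih
      _ = C * (ν g + (l.map ν).sum) := by ring

theorem abs_map_pow_sub_le (hΦ : IsRelativeQuasimorphism ν C Φ) (hν : ν 1 = 0) (g : M) (n : ℕ) :
    |Φ (g ^ n) - n * Φ g| ≤ n * (C * ν g) := by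
  simpa [mul_left_comm] using hΦ.abs_map_list_prod_sub_sum_le hν (List.replicate n g)

theorem abs_limit_sub_map_le (hΦ : IsRelativeQuasimorphism ν C Φ) (hν : ν 1 = 0) {g : M} {a : ℝ}
    (ha : Tendsto (fun n : ℕ => Φ (g ^ n) / n) atTop (𝓝 a)) : |a - Φ g| ≤ C * ν g := by
  refine le_of_tendsto (ha.sub_const (Φ g)).abs ?_
  filter_upwards [eventually_gt_atTop 0] with n hn
  have hn : (0 : ℝ) < n := Nat.cast_pos.2 hn
  calc |Φ (g ^ n) / n - Φ g| = |Φ (g ^ n) - n * Φ g| / n := by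
        rw [div_sub' hn.ne', abs_div, abs_of_pos hn]
    _ ≤ C * ν g := (div_le_iff₀' hn).2 (hΦ.abs_map_pow_sub_le hν g n)

theorem abs_map_le_of_tendsto_zero (hΦ : IsRelativeQuasimorphism ν C Φ) (hν : ν 1 = 0) {g : M}
    (hg : Tendsto (fun n : ℕ => Φ (g ^ n) / n) atTop (𝓝 0)) : |Φ g| ≤ C * ν g := by
  simpa using hΦ.abs_limit_sub_map_le hν hg

theorem abs_map_list_prod_le (hΦ : IsRelativeQuasimorphism ν C Φ) (hν : ν 1 = 0) {l : List M}
    (hl : ∀ g ∈ l, Tendsto (fun n : ℕ => Φ (g ^ n) / n) atTop (𝓝 0)) :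
    |Φ l.prod| ≤ 2 * C * (l.map ν).sum := by
  have hsum : |(l.map Φ).sum| ≤ C * (l.map ν).sum :=
    calc |(l.map Φ).sum| ≤ (l.map fun g => |Φ g|).sum := by
          simpa [Function.comp_def] using
            List.le_sum_of_subadditive (abs : ℝ → ℝ) abs_zero.le abs_add_le (l.map Φ)
      _ ≤ (l.map fun g => C * ν g).sum :=
          List.sum_le_sum fun g hg => hΦ.abs_map_le_of_tendsto_zero hν (hl g hg)
      _ = C * (l.map ν).sum := List.sum_map_mul_left ..
  linarith [hΦ.abs_map_list_prod_sub_sum_le hν l, abs_sub_abs_le_abs_sub (Φ l.prod) (l.map Φ).sum]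

end IsRelativeQuasimorphism

section WordNorm

variable {G : Type*} [Group G] {S : Set G}

theorem submonoidClosure_eq_top_of_inv_mem (hgen : Subgroup.closure S = ⊤)
    (hinv : ∀ s ∈ S, s⁻¹ ∈ S) : Submonoid.closure S = ⊤ := by
  have hsub : S⁻¹ ⊆ S := fun s hs => by simpa using hinv s⁻¹ hs
  rw [← Set.union_eq_left.2 hsub, ← Subgroup.closure_toSubmonoid, hgen, Subgroup.top_toSubmonoid]

theorem wordNorm_list_prod_le {l : List G} (hl : ∀ x ∈ l, x ∈ S) : wordNorm S l.prod ≤ l.length :=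
  Nat.sInf_le ⟨l, rfl, hl, rfl⟩

theorem wordNorm_one : wordNorm S 1 = 0 := by
  simpa using wordNorm_list_prod_le (S := S) (l := []) (by simp)

theorem wordNorm_le_one_of_mem {s : G} (hs : s ∈ S) : wordNorm S s ≤ 1 := by
  simpa using wordNorm_list_prod_le (l := [s]) (by simpa using hs)

theorem exists_list_length_eq_wordNorm (hgen : Submonoid.closure S = ⊤) (g : G) :
    ∃ l : List G, l.length = wordNorm S g ∧ (∀ x ∈ l, x ∈ S) ∧ l.prod = g := by
  obtain ⟨l, hl, hprod⟩ := Submonoid.exists_list_of_mem_closure (hgen ▸ Submonoid.mem_top g)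
  have hne : {n | ∃ l : List G, l.length = n ∧ (∀ x ∈ l, x ∈ S) ∧ l.prod = g}.Nonempty :=
    ⟨l.length, l, rfl, hl, hprod⟩
  exact Nat.sInf_mem hne

theorem wordNorm_mul_le (hgen : Submonoid.closure S = ⊤) (g h : G) :
    wordNorm S (g * h) ≤ wordNorm S g + wordNorm S h := by
  obtain ⟨l, hl_length, hl, rfl⟩ := exists_list_length_eq_wordNorm hgen g
  obtain ⟨m, hm_length, hm, rfl⟩ := exists_list_length_eq_wordNorm hgen h
  rw [← hl_length, ← hm_length, ← List.prod_append, ← List.length_append]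
  exact wordNorm_list_prod_le fun x hx => (List.mem_append.1 hx).elim (hl x) (hm x)

theorem tendsto_stabilization_wordNorm (hgen : Submonoid.closure S = ⊤) (g : G) :
    Tendsto (fun n : ℕ => (wordNorm S (g ^ n) : ℝ) / n) atTop
      (𝓝 (stabilization (fun g => (wordNorm S g : ℝ)) g)) :=
  tendsto_stabilization (fun _ => Nat.cast_nonneg _)
    (fun g h => mod_cast wordNorm_mul_le hgen g h) g

variable {Φ : G → ℝ} {C : ℝ}

namespace IsRelativeQuasimorphism

theorem abs_map_le_wordNorm (hΦ : IsRelativeQuasimorphism (fun g => (wordNorm S g : ℝ)) C Φ)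
    (hgen : Submonoid.closure S = ⊤)
    (hS : ∀ s ∈ S, Tendsto (fun n : ℕ => Φ (s ^ n) / n) atTop (𝓝 0)) (g : G) :
    |Φ g| ≤ 2 * C * wordNorm S g := by
  obtain ⟨l, hlength, hl, rfl⟩ := exists_list_length_eq_wordNorm hgen g
  have hsum : (l.map fun s => (wordNorm S s : ℝ)).sum ≤ l.length := by
    simpa using List.sum_le_card_nsmul (l.map fun s => (wordNorm S s : ℝ)) 1
      (List.forall_mem_map.2 fun s hs => mod_cast wordNorm_le_one_of_mem (hl s hs))
  rw [← hlength]
  exact (hΦ.abs_map_list_prod_le (mod_cast wordNorm_one) fun s hs => hS s (hl s hs)).trans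
    (mul_le_mul_of_nonneg_left hsum (mul_nonneg zero_le_two hΦ.nonneg))

theorem abs_limit_le_stabilization_wordNorm
    (hΦ : IsRelativeQuasimorphism (fun g => (wordNorm S g : ℝ)) C Φ)
    (hgen : Submonoid.closure S = ⊤)
    (hS : ∀ s ∈ S, Tendsto (fun n : ℕ => Φ (s ^ n) / n) atTop (𝓝 0)) {f : G} {a : ℝ}
    (ha : Tendsto (fun n : ℕ => Φ (f ^ n) / n) atTop (𝓝 a)) :
    |a| ≤ 2 * C * stabilization (fun g => (wordNorm S g : ℝ)) f := by
  refine le_of_tendsto_of_tendsto' ha.abs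
    ((tendsto_stabilization_wordNorm hgen f).const_mul (2 * C)) fun n => ?_
  rw [abs_div, Nat.abs_cast, ← mul_div_assoc]
  exact div_le_div_of_nonneg_right (hΦ.abs_map_le_wordNorm hgen hS _) n.cast_nonneg

end IsRelativeQuasimorphism

end WordNorm

theorem stable_word_norm_bounded_below_and_stably_unbounded_general
    {G : Type*} [Group G] {S : Set G} (hgen : Submonoid.closure S = ⊤)
    {Φ : G → ℝ} {C : ℝ} (hC : 0 < C)
    (hΦ : IsRelativeQuasimorphism (fun g => (wordNorm S g : ℝ)) C Φ) {Φbar : G → ℝ}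
    (hlim : ∀ g, Tendsto (fun n : ℕ => Φ (g ^ n) / n) atTop (𝓝 (Φbar g)))
    (hvanish : ∀ s ∈ S, Φbar s = 0) :
    (∀ f : G, ∃ L : ℝ,
      Tendsto (fun k : ℕ => (wordNorm S (f ^ k) : ℝ) / k) atTop (𝓝 L) ∧
      |Φbar f| / (2 * C) ≤ L) ∧
    ((∃ f : G, Φbar f ≠ 0) → ∃ (f : G) (L : ℝ),
      Tendsto (fun k : ℕ => (wordNorm S (f ^ k) : ℝ) / k) atTop (𝓝 L) ∧ 0 < L) := by
  have hbound (f : G) : |Φbar f| / (2 * C) ≤ stabilization (fun g => (wordNorm S g : ℝ)) f :=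
    (div_le_iff₀' (by positivity)).2 <| hΦ.abs_limit_le_stabilization_wordNorm hgen
      (fun s hs => hvanish s hs ▸ hlim s) (hlim f)
  refine ⟨fun f => ⟨_, tendsto_stabilization_wordNorm hgen f, hbound f⟩, ?_⟩
  rintro ⟨f, hf⟩
  have hpos : 0 < |Φbar f| / (2 * C) := by positivity
  exact ⟨f, _, tendsto_stabilization_wordNorm hgen f, hpos.trans_le (hbound f)⟩

/-- Let `S` be a symmetric, conjugation-closed generating set of `G`
not containing the identity, and let `Φ` be a relative quasimorphism with respect to
the word norm `‖·‖_S` with constant `C > 0` such that for every `g` the limit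
`Φ̄(g) = lim Φ(gⁿ)/n` exists and `Φ̄` vanishes on `S`. Then for every `f` the stable
word norm `lim_{k→∞} ‖f^k‖_S/k` exists and is at least `|Φ̄(f)|/(3C)`; in particular,
if `Φ̄(f) ≠ 0` for some `f`, then the word norm is stably unbounded. -/
theorem stable_word_norm_bounded_below_and_stably_unbounded
    {G : Type*} [Group G] (S : Set G)
    (hgen : Subgroup.closure S = ⊤)
    (hone : (1 : G) ∉ S)
    (hsymm : ∀ s ∈ S, s⁻¹ ∈ S)
    (hconjS : ∀ s ∈ S, ∀ g : G, g * s * g⁻¹ ∈ S)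
    (Φ : G → ℝ) (C : ℝ) (hC : 0 < C)
    (hrel : ∀ g h : G, |Φ (g * h) - Φ g - Φ h| ≤
      C * min (wordNorm S g : ℝ) (wordNorm S h : ℝ))
    (Φbar : G → ℝ)
    (hlim : ∀ g : G,
      Filter.Tendsto (fun n : ℕ => Φ (g ^ n) / n) Filter.atTop (nhds (Φbar g)))
    (hvanish : ∀ s ∈ S, Φbar s = 0) :
    (∀ f : G, ∃ L : ℝ,
      Filter.Tendsto (fun k : ℕ => (wordNorm S (f ^ k) : ℝ) / k) Filter.atTop (nhds L) ∧
      |Φbar f| / (3 * C) ≤ L) ∧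
    ((∃ f : G, Φbar f ≠ 0) → ∃ (f : G) (L : ℝ),
      Filter.Tendsto (fun k : ℕ => (wordNorm S (f ^ k) : ℝ) / k) Filter.atTop (nhds L) ∧
      0 < L) := by
  have hle (f : G) : |Φbar f| / (3 * C) ≤ |Φbar f| / (2 * C) := by gcongr; norm_num
  exact (stable_word_norm_bounded_below_and_stably_unbounded_general
    (submonoidClosure_eq_top_of_inv_mem hgen hsymm) hC ⟨hC.le, hrel⟩ hlim hvanish).imp_left
      fun h f => (h f).imp fun _ hL => hL.imp_right (hle f).trans
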